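/- arXiv:1511.04992 — 3 statements merged into one kernel-verified Lean document; each statement's English description precedes it below -/
import Mathlib

section
/- Let N ≥ 1 and let X₁, …, X_N be i.i.d. nonnegative random variables with E[X₁] = 1 and E[X₁⁶] < ∞. Set ε_N = N^{−1/2} Σ_{i=1}^N (X_i − 1), m_j = E[(X₁−1)^j], γ² = m₂, ρ₃ = m₃, ρ₄ = m₄ − 3m₂², ρ₅ = m₅ − 10 m₃ m₂, and let P̃ be the tilted probability measure with dP̃/dP = N^{−1} Σ_{i=1}^N X_i. Then: Ẽ[ε_N] = γ²/√N; Ẽ[ε_N²] = γ² + ρ₃/N; Ẽ[ε_N³] = (3γ⁴ + ρ₃)/√N + ρ₄/N^{3/2}; Ẽ[ε_N⁴] = 3γ⁴ + (ρ₄ + 10 γ² ρ₃)/N + ρ₅/N². -/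
/-!
The density of the tilted measure is `N⁻¹ ∑ X_i = 1 + N^{-1/2} ε`, and it is almost surely
nonnegative, so `Ẽ[ε^k] = E[ε^k] + N^{-1/2} E[ε^{k+1}]`. It therefore suffices to know the first five
moments of `T = ∑ (X_i - 1)` under `P`, a sum of i.i.d. centred variables. These follow by adding one
summand at a time: independence turns the binomial expansion of `(T + Y)^k` into
`E[(T + Y)^k] = ∑ j, C(k, j) E[T^j] E[Y^(k-j)]` (`integral_add_pow_of_indepFun`), a recursion in the
number of summands whose solution is recorded in `moments_sum`.
-/

open MeasureTheory
open scoped ENNReal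
open ProbabilityTheory

lemma integrable_pow_of_memLp {Ω : Type*} [MeasurableSpace Ω] {P : Measure Ω}
    [IsProbabilityMeasure P] {U : Ω → ℝ} {n k : ℕ} (hU : MemLp U n P) (hk : k ≤ n) :
    Integrable (fun ω => U ω ^ k) P := by
  have h : MemLp U k P := hU.mono_exponent (by exact_mod_cast hk)
  have h2 := h.integrable_norm_pow'
  refine h2.mono (h.1.pow k) (Filter.Eventually.of_forall fun ω => ?_)
  simp

lemma integral_add_pow_of_indepFun {Ω : Type*} [MeasurableSpace Ω] {P : Measure Ω}
    [IsProbabilityMeasure P] {U V : Ω → ℝ} {n k : ℕ} (hU : MemLp U n P) (hV : MemLp V n P)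
    (hUV : IndepFun U V P) (hk : k ≤ n) :
    ∫ ω, (U ω + V ω) ^ k ∂P =
      ∑ j ∈ Finset.range (k + 1), (∫ ω, U ω ^ j ∂P) * (∫ ω, V ω ^ (k - j) ∂P) * (k.choose j) := by
  have hind : ∀ a b : ℕ, IndepFun (fun ω => U ω ^ a) (fun ω => V ω ^ b) P := fun a b =>
    hUV.comp (φ := fun x => x ^ a) (ψ := fun x => x ^ b) (by fun_prop) (by fun_prop)
  have hiU : ∀ j ≤ k, Integrable (fun ω => U ω ^ j) P := fun j hj =>
    integrable_pow_of_memLp hU (hj.trans hk)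
  have hiV : ∀ j ≤ k, Integrable (fun ω => V ω ^ j) P := fun j hj =>
    integrable_pow_of_memLp hV (hj.trans hk)
  simp_rw [add_pow]
  rw [integral_finsetSum]
  · refine Finset.sum_congr rfl fun j hj => ?_
    have hj' : j ≤ k := Nat.lt_succ_iff.mp (Finset.mem_range.mp hj)
    rw [integral_mul_const]
    congr 1
    exact (hind j (k - j)).integral_fun_mul_eq_mul_integral (hiU j hj').1
      (hiV _ (Nat.sub_le _ _)).1
  · intro j hj
    have hj' : j ≤ k := Nat.lt_succ_iff.mp (Finset.mem_range.mp hj)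
    exact ((hind j (k - j)).integrable_mul (hiU j hj') (hiV _ (Nat.sub_le _ _))).mul_const _

/-- The first five moments of a sum of independent centred variables with common moments
`m 2, …, m 5`, in terms of the number of summands. -/
lemma moments_sum {Ω ι : Type*} [MeasurableSpace Ω] {P : Measure Ω} [IsProbabilityMeasure P]
    {Y : ι → Ω → ℝ} (hmeas : ∀ i, Measurable (Y i)) (hind : iIndepFun Y P)
    (hL : ∀ i, MemLp (Y i) (6 : ℕ) P) {m : ℕ → ℝ} (hm : ∀ i j, ∫ ω, Y i ω ^ j ∂P = m j)
    (h1 : m 1 = 0) (s : Finset ι) :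
    (∫ ω, (∑ i ∈ s, Y i ω) ^ 1 ∂P) = 0 ∧
    (∫ ω, (∑ i ∈ s, Y i ω) ^ 2 ∂P) = s.card * m 2 ∧
    (∫ ω, (∑ i ∈ s, Y i ω) ^ 3 ∂P) = s.card * m 3 ∧
    (∫ ω, (∑ i ∈ s, Y i ω) ^ 4 ∂P) = s.card * m 4 + 3 * s.card * (s.card - 1) * m 2 ^ 2 ∧
    (∫ ω, (∑ i ∈ s, Y i ω) ^ 5 ∂P) =
      s.card * m 5 + 10 * s.card * (s.card - 1) * (m 2 * m 3) := by
  classical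
  induction s using Finset.induction_on with
  | empty => simp
  | insert a s ha ih =>
    obtain ⟨i1, i2, i3, i4, i5⟩ := ih
    have hT : MemLp (fun ω => ∑ i ∈ s, Y i ω) (6 : ℕ) P :=
      memLp_finsetSum s fun i _ => hL i
    have hI : IndepFun (fun ω => ∑ i ∈ s, Y i ω) (Y a) P := by
      have := hind.indepFun_finsetSum_of_notMem hmeas ha
      simpa only [Finset.sum_fn] using this
    have key : ∀ k ≤ 6, ∫ ω, (∑ i ∈ insert a s, Y i ω) ^ k ∂P =
        ∑ j ∈ Finset.range (k + 1),
          (∫ ω, (∑ i ∈ s, Y i ω) ^ j ∂P) * m (k - j) * (k.choose j) := by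
      intro k hk
      simp_rw [Finset.sum_insert ha, add_comm (Y a _)]
      rw [integral_add_pow_of_indepFun hT (hL a) hI hk]
      simp_rw [hm]
    have i0 : ∫ ω, (∑ i ∈ s, Y i ω) ^ 0 ∂P = 1 := by simp
    have h0 : m 0 = 1 := by simp [← hm a 0]
    have hc : ((insert a s).card : ℝ) = s.card + 1 := by
      rw [Finset.card_insert_of_notMem ha]; push_cast; rfl
    refine ⟨?_, ?_, ?_, ?_, ?_⟩ <;> rw [key _ (by norm_num)] <;>
      simp only [Finset.sum_range_succ, Finset.sum_range_zero, i0, i1, i2, i3, i4, i5, hc,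
        Nat.reduceSub, h0, h1, Nat.choose, Nat.sub_zero] <;> push_cast <;> ring

/-- Let `X₁, …, X_N` be i.i.d. nonnegative random variables with
`E[X₁] = 1` and `E[X₁⁶] < ∞`.  Set `ε_N = N^{−1/2} Σ_i (X_i − 1)`, let `m_j = E[(X₁−1)^j]`,
`γ² = m₂`, `ρ₃ = m₃`, `ρ₄ = m₄ − 3m₂²`, `ρ₅ = m₅ − 10 m₃ m₂`, and let `P̃` be the tilted
measure with `dP̃/dP = N⁻¹ Σ_i X_i`.  Then `Ẽ[ε_N] = γ²/√N`, `Ẽ[ε_N²] = γ² + ρ₃/N`,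
`Ẽ[ε_N³] = (3γ⁴ + ρ₃)/√N + ρ₄/N^{3/2}` and
`Ẽ[ε_N⁴] = 3γ⁴ + (ρ₄ + 10γ²ρ₃)/N + ρ₅/N²`. -/
theorem stmt15 (N : ℕ) (hN : 1 ≤ N)
    {Ω : Type*} [MeasurableSpace Ω] (P : Measure Ω) [IsProbabilityMeasure P]
    (X : Fin N → Ω → ℝ) (hXmeas : ∀ i, Measurable (X i))
    (ν : Measure ℝ) [IsProbabilityMeasure ν]
    (hiid : Measure.map (fun ω i => X i ω) P = Measure.pi fun _ : Fin N => ν)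
    (hnonneg : ∀ᵐ x ∂ν, 0 ≤ x)
    (hmean : (∫ x, x ∂ν) = 1)
    (hmom : Integrable (fun x => x ^ 6) ν)
    (m : ℕ → ℝ) (hm : ∀ j, m j = ∫ x, (x - 1) ^ j ∂ν)
    (γsq ρ3 ρ4 ρ5 : ℝ)
    (hγsq : γsq = m 2) (hρ3 : ρ3 = m 3) (hρ4 : ρ4 = m 4 - 3 * m 2 ^ 2)
    (hρ5 : ρ5 = m 5 - 10 * m 3 * m 2)
    (Ptilde : Measure Ω)
    (hPtilde : Ptilde = P.withDensity fun ω => ENNReal.ofReal ((N : ℝ)⁻¹ * ∑ i, X i ω))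
    (ε : Ω → ℝ) (hε : ∀ ω, ε ω = (Real.sqrt N)⁻¹ * ∑ i, (X i ω - 1)) :
    (∫ ω, ε ω ∂Ptilde) = γsq / Real.sqrt N ∧
      (∫ ω, ε ω ^ 2 ∂Ptilde) = γsq + ρ3 / N ∧
      (∫ ω, ε ω ^ 3 ∂Ptilde) = (3 * γsq ^ 2 + ρ3) / Real.sqrt N + ρ4 / Real.sqrt N ^ 3 ∧
      (∫ ω, ε ω ^ 4 ∂Ptilde) = 3 * γsq ^ 2 + (ρ4 + 10 * γsq * ρ3) / N + ρ5 / N ^ 2 := by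
  have hNpos : (0 : ℝ) < N := by exact_mod_cast hN
  have hs : 0 < Real.sqrt N := Real.sqrt_pos.mpr hNpos
  have hsq : Real.sqrt N ^ 2 = N := Real.sq_sqrt hNpos.le
  have hmap : ∀ i, P.map (X i) = ν := by
    intro i
    have h := (measurePreserving_eval (fun _ : Fin N => ν) i).map_eq
    rw [← hiid, Measure.map_map (measurable_pi_apply i) (measurable_pi_lambda _ hXmeas)] at h
    exact h
  have hindX : iIndepFun X P := by
    rw [iIndepFun_iff_map_fun_eq_pi_map fun i => (hXmeas i).aemeasurable]
    simp_rw [hmap]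
    exact hiid
  set Y : Fin N → Ω → ℝ := fun i ω => X i ω - 1 with hY
  have hYmeas : ∀ i, Measurable (Y i) := fun i => (hXmeas i).sub_const 1
  have hindY : iIndepFun Y P :=
    hindX.comp (fun _ x => x - 1) fun _ => measurable_id.sub_const 1
  have hidL : MemLp (fun x : ℝ => x) (6 : ℕ) ν := by
    rw [← integrable_norm_rpow_iff (by fun_prop) (by norm_num) (by norm_num)]
    refine hmom.congr (Filter.Eventually.of_forall fun x => ?_)
    simp only [ENNReal.toReal_natCast, Real.rpow_natCast, Real.norm_eq_abs]
    exact (Even.pow_abs (by decide) x).symm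
  have hYL : ∀ i, MemLp (Y i) (6 : ℕ) P := by
    intro i
    have hX : MemLp (X i) (6 : ℕ) P := by
      have h := hidL
      rw [← hmap i] at h
      exact h.comp_of_map (hXmeas i).aemeasurable
    exact hX.sub (memLp_const 1)
  have hYm : ∀ i j, ∫ ω, Y i ω ^ j ∂P = m j := by
    intro i j
    rw [hm, ← hmap i, integral_map (hXmeas i).aemeasurable (by fun_prop)]
  have hm1 : m 1 = 0 := by
    have hi : Integrable (fun x : ℝ => x) ν := by
      simpa using integrable_pow_of_memLp hidL (k := 1) (by norm_num)
    simp only [hm, pow_one]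
    rw [integral_sub hi (integrable_const 1), hmean]
    simp
  obtain ⟨t1, t2, t3, t4, t5⟩ := moments_sum hYmeas hindY hYL hYm hm1 Finset.univ
  simp only [Finset.card_univ, Fintype.card_fin] at t1 t2 t3 t4 t5
  have hTL : MemLp (fun ω => ∑ i, Y i ω) (6 : ℕ) P := memLp_finsetSum _ fun i _ => hYL i
  have hdens : ∀ᵐ ω ∂P, 0 ≤ (N : ℝ)⁻¹ * ∑ i, X i ω := by
    have h : ∀ i, ∀ᵐ ω ∂P, 0 ≤ X i ω := fun i =>
      ae_of_ae_map (hXmeas i).aemeasurable ((hmap i).symm ▸ hnonneg)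
    filter_upwards [ae_all_iff.mpr h] with ω hω
    exact mul_nonneg (inv_nonneg.mpr hNpos.le) (Finset.sum_nonneg fun i _ => hω i)
  -- The tilted-moment identity, written for the unnormalised sum `∑ Y i = √N ε`.
  have tilt : ∀ k ≤ 5, ∫ ω, ε ω ^ k ∂Ptilde = (Real.sqrt N)⁻¹ ^ k *
      ((∫ ω, (∑ i, Y i ω) ^ k ∂P) + (N : ℝ)⁻¹ * ∫ ω, (∑ i, Y i ω) ^ (k + 1) ∂P) := by
    intro k hk
    rw [hPtilde, integral_withDensity_eq_integral_toReal_smul (by fun_prop)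
      (Filter.Eventually.of_forall fun _ => ENNReal.ofReal_lt_top)]
    rw [← integral_const_mul, ← integral_add (integrable_pow_of_memLp hTL (by lia))
      ((integrable_pow_of_memLp hTL (by lia)).const_mul _), ← integral_const_mul]
    refine integral_congr_ae ?_
    filter_upwards [hdens] with ω hω
    have hsum : ∑ i, X i ω = (∑ i, Y i ω) + N := by simp [hY]
    rw [ENNReal.toReal_ofReal hω, hε, hsum, smul_eq_mul, mul_pow]
    field_simp
    ring
  have e1 := tilt 1 (by norm_num)
  simp only [pow_one] at e1 t1
  have e2 := tilt 2 (by norm_num)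
  have e3 := tilt 3 (by norm_num)
  have e4 := tilt 4 (by norm_num)
  norm_num only [t1, t2, t3, t4, t5] at e1 e2 e3 e4
  subst hγsq hρ3 hρ4 hρ5
  rw [e1, e2, e3, e4]
  -- With `N = r ^ 2` the four identities become rational in `r = √N`.
  generalize Real.sqrt N = r at hs hsq ⊢
  generalize (N : ℝ) = x at hsq ⊢
  subst hsq
  have hr : r ≠ 0 := hs.ne'
  refine ⟨?_, ?_, ?_, ?_⟩ <;> field_simp <;> ring
end

section
/- Let {X_{n,i} : 1 ≤ i ≤ k_n} and {ℱ_n} satisfy the hypotheses of the conditional Lindeberg central limit theorem (conditional independence given ℱ_n, conditionally centred, conditional variances summing to s_n² → σ² > 0 in probability, and the conditional Lindeberg condition), and set Z_n = Σ_{i=1}^{k_n} X_{n,i}. If T_n are real random variables with T_n → c in probability for a constant c, then for every bounded continuous f : ℝ → ℝ, E[ f(Z_n + T_n) | ℱ_n ] → E[f(σ Z + c)] in probability, where Z ~ N(0,1); i.e. Z_n + T_n | ℱ_n ⇒ N(c, σ²). -/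
open MeasureTheory ProbabilityTheory Filter
open scoped ENNReal NNReal Topology

/-!
Since the limit of `T n` is a constant, the perturbation can be separated from the conditional
central limit theorem for the row sums `Z n`.

*Conditional Lindeberg theorem* (`cond_lindeberg_clt`). Each row `(X n 1, …, X n (k n))` takes
values in the standard Borel space `Fin (k n) → ℝ`, so it has a regular conditional distribution
given `ℱ n`, whatever `Ω` is (`exists_regular_condDistrib`). For almost every `ω`, all the
conditional expectations in the hypotheses are integrals against these measures, and the
conditional law of `Z n` has as characteristic function the product of those of its marginals
(`ae_charFun_sum_eq_prod`). The variance condition and the Lindeberg conditions for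
`ε = 1 / (m + 1)` are countably many convergences in probability, so along a common subsequence
they hold almost surely (`exists_common_subseq`). For fixed `ω` the classical Lindeberg estimate
(`lindeberg_charFun_bound`) and Lévy's continuity theorem then give weak convergence along that
subsequence, which is what convergence in probability requires.

*Perturbation.* Taking expectations, `Z n` converges in distribution unconditionally
(`tendstoInDistribution_of_condExp`). Slutsky's theorem, applied to the bounded continuous function
`(z, t) ↦ |f (z + t) - f (z + c)|`, which vanishes at `t = c`, shows that
`f (Z n + T n) - f (Z n + c)` tends to `0` in `L¹`. Conditional expectation contracts `L¹`, so the
conditional expectations of `f (Z n + T n)` and `f (Z n + c)` have the same limit in probability.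
-/

/-! ### The Lindeberg estimate for characteristic functions -/

lemma norm_prod_sub_prod_le_sum {ι : Type*} (s : Finset ι) (a b : ι → ℂ)
    (ha : ∀ i ∈ s, ‖a i‖ ≤ 1) (hb : ∀ i ∈ s, ‖b i‖ ≤ 1) :
    ‖∏ i ∈ s, a i - ∏ i ∈ s, b i‖ ≤ ∑ i ∈ s, ‖a i - b i‖ := by
  classical
  induction s using Finset.induction_on with
  | empty => simp
  | insert j s hj ih =>
    have ih := ih (fun i hi => ha i (Finset.mem_insert_of_mem hi))
      (fun i hi => hb i (Finset.mem_insert_of_mem hi))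
    rw [Finset.prod_insert hj, Finset.prod_insert hj, Finset.sum_insert hj]
    have h1 : ‖∏ i ∈ s, a i‖ ≤ 1 := by
      rw [norm_prod]
      exact Finset.prod_le_one (fun _ _ => norm_nonneg _)
        (fun i hi => ha i (Finset.mem_insert_of_mem hi))
    have hbj := hb j (Finset.mem_insert_self j s)
    calc ‖a j * ∏ i ∈ s, a i - b j * ∏ i ∈ s, b i‖
        = ‖(a j - b j) * ∏ i ∈ s, a i + b j * (∏ i ∈ s, a i - ∏ i ∈ s, b i)‖ := by
          congr 1; ring
      _ ≤ ‖a j - b j‖ * ‖∏ i ∈ s, a i‖ + ‖b j‖ * ‖∏ i ∈ s, a i - ∏ i ∈ s, b i‖ := by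
          rw [← norm_mul, ← norm_mul]; exact norm_add_le _ _
      _ ≤ ‖a j - b j‖ * 1 + 1 * ‖∏ i ∈ s, a i - ∏ i ∈ s, b i‖ := by gcongr
      _ ≤ _ := by linarith

/-- The second-order Taylor remainder of `exp (i y)` is bounded both by a multiple of `y ^ 2`, used
for large arguments, and by a multiple of `|y| ^ 3`, used for small ones. -/
lemma norm_cexp_taylor_le (y : ℝ) :
    ‖Complex.exp (y * Complex.I) - (1 + y * Complex.I - y ^ 2 / 2)‖ ≤ 4 * y ^ 2 ∧
    ‖Complex.exp (y * Complex.I) - (1 + y * Complex.I - y ^ 2 / 2)‖ ≤ 4 * |y| ^ 3 := by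
  have hsq : |y| ^ 2 = y ^ 2 := sq_abs y
  have h0 := abs_nonneg y
  rcases le_total |y| 1 with h | h
  · have hb := Complex.exp_bound (x := y * Complex.I) (by simpa using h) (n := 3) (by norm_num)
    have : ∑ m ∈ Finset.range 3, ((y : ℂ) * Complex.I) ^ m / (m.factorial : ℂ)
        = 1 + y * Complex.I - y ^ 2 / 2 := by
      simp [Finset.sum_range_succ, mul_pow, Nat.factorial]; ring
    rw [this] at hb
    have hc : ‖(y : ℂ) * Complex.I‖ = |y| := by simp
    rw [hc] at hb
    norm_num [Nat.factorial] at hb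
    have h3 : |y| ^ 3 ≤ y ^ 2 := by rw [← hsq]; nlinarith [sq_nonneg |y|]
    have : 0 ≤ |y| ^ 3 := by positivity
    constructor <;> linarith
  · have h2 : ‖Complex.exp (y * Complex.I) - (1 + y * Complex.I - y ^ 2 / 2)‖
        ≤ 1 + (1 + |y| + y ^ 2 / 2) := by
      refine (norm_sub_le _ _).trans ?_
      rw [Complex.norm_exp_ofReal_mul_I]
      gcongr
      refine (norm_sub_le _ _).trans ?_
      gcongr
      · refine (norm_add_le _ _).trans ?_
        simp
      · simp
    have h3 : y ^ 2 ≤ |y| ^ 3 := by rw [← hsq]; nlinarith [sq_nonneg |y|]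
    have h4 : |y| ≤ y ^ 2 := by rw [← hsq]; nlinarith
    constructor <;> linarith

/-- Second-order expansion of the characteristic function of a centred law: splitting the integral at
`|x| = ε`, the cubic remainder bound is used below `ε` and the quadratic one above it. -/
lemma charFun_taylor_bound (ν : Measure ℝ) [IsProbabilityMeasure ν]
    (h2 : Integrable (fun x : ℝ => x ^ 2) ν) (h1 : ∫ x, x ∂ν = 0) (t ε : ℝ) (hε : 0 < ε) :
    ‖charFun ν t - (1 - ((t ^ 2 / 2 * ∫ x, x ^ 2 ∂ν : ℝ) : ℂ))‖ ≤
      4 * ε * |t| ^ 3 * ∫ x, x ^ 2 ∂ν + 4 * t ^ 2 * ∫ x, (if ε ≤ |x| then x ^ 2 else 0) ∂ν := by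
  have hm : MemLp (fun x : ℝ => x) 2 ν :=
    (memLp_two_iff_integrable_sq measurable_id.aestronglyMeasurable).2 h2
  have hi1 : Integrable (fun x : ℝ => x) ν := hm.integrable (by norm_num)
  have hL : Integrable (fun x : ℝ => if ε ≤ |x| then x ^ 2 else 0) ν := by
    refine h2.mono (Measurable.aestronglyMeasurable ?_) (ae_of_all _ fun x => ?_)
    · exact Measurable.ite (measurableSet_le measurable_const (by fun_prop)) (by fun_prop)
        measurable_const
    · split_ifs <;> simp [sq_nonneg]
  have hexp : Integrable (fun x : ℝ => Complex.exp ((t * x : ℝ) * Complex.I)) ν := by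
    refine Integrable.mono' (integrable_const (1 : ℝ))
      (Measurable.aestronglyMeasurable (by fun_prop)) (ae_of_all _ fun x => ?_)
    rw [Complex.norm_exp_ofReal_mul_I]
  have hlin : Integrable (fun x : ℝ => (1 + ((t * x : ℝ) : ℂ) * Complex.I
      - ((t * x : ℝ) : ℂ) ^ 2 / 2)) ν := by
    refine Integrable.sub (Integrable.add (integrable_const _) ?_) ?_
    · exact ((hi1.const_mul t).ofReal).mul_const _
    · have := ((h2.const_mul (t ^ 2 / 2)).ofReal (𝕜 := ℂ))
      refine this.congr (ae_of_all _ fun x => ?_)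
      simp; ring
  have heq : charFun ν t - (1 - ((t ^ 2 / 2 * ∫ x, x ^ 2 ∂ν : ℝ) : ℂ)) =
      ∫ x, (Complex.exp ((t * x : ℝ) * Complex.I) - (1 + ((t * x : ℝ) : ℂ) * Complex.I
      - ((t * x : ℝ) : ℂ) ^ 2 / 2)) ∂ν := by
    rw [integral_sub hexp hlin, charFun_apply_real]
    have e1 : ∫ x : ℝ, (1 + ((t * x : ℝ) : ℂ) * Complex.I - ((t * x : ℝ) : ℂ) ^ 2 / 2) ∂ν
        = 1 - ((t ^ 2 / 2 * ∫ x, x ^ 2 ∂ν : ℝ) : ℂ) := by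
      rw [integral_sub (Integrable.add (integrable_const _) (((hi1.const_mul t).ofReal).mul_const _))]
      · rw [integral_add (integrable_const _) (((hi1.const_mul t).ofReal).mul_const _)]
        rw [integral_mul_const, integral_complex_ofReal, integral_const_mul, h1]
        have : (fun x : ℝ => ((t * x : ℝ) : ℂ) ^ 2 / 2)
            = fun x : ℝ => (((t ^ 2 / 2) * x ^ 2 : ℝ) : ℂ) := by
          funext x; push_cast; ring
        rw [this, integral_complex_ofReal, integral_const_mul]
        simp
      · have := ((h2.const_mul (t ^ 2 / 2)).ofReal (𝕜 := ℂ))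
        refine this.congr (ae_of_all _ fun x => ?_)
        simp; ring
    rw [e1]
    push_cast
    rfl
  rw [heq]
  calc _ ≤ ∫ x, (4 * ε * |t| ^ 3 * x ^ 2 + 4 * t ^ 2 * (if ε ≤ |x| then x ^ 2 else 0)) ∂ν := by
        refine norm_integral_le_of_norm_le ((h2.const_mul _).add (hL.const_mul _))
          (ae_of_all _ fun x => ?_)
        obtain ⟨ha, hb⟩ := norm_cexp_taylor_le (t * x)
        by_cases hx : ε ≤ |x|
        · rw [if_pos hx]
          refine ha.trans ?_
          have : 0 ≤ 4 * ε * |t| ^ 3 * x ^ 2 := by positivity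
          nlinarith
        · rw [if_neg hx]
          refine hb.trans ?_
          rw [abs_mul, mul_pow]
          have : |x| ^ 3 ≤ ε * x ^ 2 := by
            rw [← sq_abs x]; push Not at hx; nlinarith [sq_nonneg |x|]
          have h3 : 0 ≤ |t| ^ 3 := by positivity
          nlinarith
    _ = _ := by
        rw [integral_add (h2.const_mul _) (hL.const_mul _), integral_const_mul, integral_const_mul]

/-- Every variance in a row is at most `ε ^ 2` plus its Lindeberg term, so the individual variances are
uniformly negligible. -/
lemma integral_sq_le (ν : Measure ℝ) [IsProbabilityMeasure ν]
    (h2 : Integrable (fun x : ℝ => x ^ 2) ν) (ε : ℝ) :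
    ∫ x, x ^ 2 ∂ν ≤ ε ^ 2 + ∫ x, (if ε ≤ |x| then x ^ 2 else 0) ∂ν := by
  have hL : Integrable (fun x : ℝ => if ε ≤ |x| then x ^ 2 else 0) ν := by
    refine h2.mono (Measurable.aestronglyMeasurable ?_) (ae_of_all _ fun x => ?_)
    · exact Measurable.ite (measurableSet_le measurable_const (by fun_prop)) (by fun_prop)
        measurable_const
    · split_ifs <;> simp [sq_nonneg]
  have : ∫ x, (ε ^ 2 + (if ε ≤ |x| then x ^ 2 else 0)) ∂ν
      = ε ^ 2 + ∫ x, (if ε ≤ |x| then x ^ 2 else 0) ∂ν := by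
    rw [integral_add (integrable_const _) hL]; simp
  rw [← this]
  refine integral_mono h2 ((integrable_const _).add hL) fun x => ?_
  dsimp only
  split_ifs with h
  · nlinarith [sq_nonneg ε]
  · push Not at h
    rw [← sq_abs x]
    nlinarith [abs_nonneg x]

lemma norm_exp_neg_sub_le (u : ℝ) (hu : 0 ≤ u) :
    ‖((Real.exp (-u) : ℝ) : ℂ) - (1 - (u : ℂ))‖ ≤ u ^ 2 := by
  have : ((Real.exp (-u) : ℝ) : ℂ) - (1 - (u : ℂ)) = ((Real.exp (-u) - (1 - u) : ℝ) : ℂ) := by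
    push_cast; ring
  rw [this, Complex.norm_real, Real.norm_eq_abs]
  have h1 := Real.add_one_le_exp (-u)
  rw [abs_of_nonneg (by linarith)]
  rcases le_total u 1 with h | h
  · have := Real.abs_exp_sub_one_sub_id_le (x := -u) (by rwa [abs_neg, abs_of_nonneg hu])
    have := (abs_le.1 this).2
    nlinarith
  · have : Real.exp (-u) ≤ 1 := Real.exp_le_one_iff.2 (by linarith)
    nlinarith

/-- Quantitative Lindeberg estimate: the product of the characteristic functions of centred laws is
compared with the characteristic function of the centred Gaussian with the same total variance. -/
lemma lindeberg_charFun_bound {ι : Type*} [Fintype ι] (ν : ι → Measure ℝ)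
    [∀ i, IsProbabilityMeasure (ν i)]
    (h2 : ∀ i, Integrable (fun x : ℝ => x ^ 2) (ν i)) (h1 : ∀ i, ∫ x, x ∂(ν i) = 0)
    (t ε : ℝ) (hε : 0 < ε) :
    ‖∏ i, charFun (ν i) t - ((Real.exp (-(t ^ 2 / 2 * ∑ i, ∫ x, x ^ 2 ∂(ν i))) : ℝ) : ℂ)‖ ≤
      4 * ε * |t| ^ 3 * (∑ i, ∫ x, x ^ 2 ∂(ν i))
        + 4 * t ^ 2 * (∑ i, ∫ x, (if ε ≤ |x| then x ^ 2 else 0) ∂(ν i))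
        + t ^ 4 / 4 * ((ε ^ 2 + ∑ i, ∫ x, (if ε ≤ |x| then x ^ 2 else 0) ∂(ν i))
          * ∑ i, ∫ x, x ^ 2 ∂(ν i)) := by
  set v : ι → ℝ := fun i => ∫ x, x ^ 2 ∂(ν i) with hv
  set L : ι → ℝ := fun i => ∫ x, (if ε ≤ |x| then x ^ 2 else 0) ∂(ν i) with hLdef
  have hv0 : ∀ i, 0 ≤ v i := fun i => integral_nonneg fun x => sq_nonneg x
  have hL0 : ∀ i, 0 ≤ L i := fun i => integral_nonneg fun x => by
    dsimp only; split_ifs <;> simp [sq_nonneg]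
  have hexp : ((Real.exp (-(t ^ 2 / 2 * ∑ i, v i)) : ℝ) : ℂ)
      = ∏ i, ((Real.exp (-(t ^ 2 / 2 * v i)) : ℝ) : ℂ) := by
    rw [← Complex.ofReal_prod, ← Real.exp_sum, Finset.mul_sum, Finset.sum_neg_distrib]
  rw [hexp]
  refine (norm_prod_sub_prod_le_sum _ _ _ (fun i _ => norm_charFun_le_one t) (fun i _ => ?_)).trans ?_
  · rw [Complex.norm_real, Real.norm_eq_abs, abs_of_pos (Real.exp_pos _), Real.exp_le_one_iff]
    have := hv0 i
    have : 0 ≤ t ^ 2 / 2 * v i := by positivity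
    linarith
  · have key : ∀ i, ‖charFun (ν i) t - ((Real.exp (-(t ^ 2 / 2 * v i)) : ℝ) : ℂ)‖ ≤
        4 * ε * |t| ^ 3 * v i + 4 * t ^ 2 * L i + t ^ 4 / 4 * ((ε ^ 2 + ∑ j, L j) * v i) := by
      intro i
      have hvi := hv0 i
      have a1 := charFun_taylor_bound (ν i) (h2 i) (h1 i) t ε hε
      have a2 := norm_exp_neg_sub_le (t ^ 2 / 2 * v i) (by positivity)
      have a3 : v i ≤ ε ^ 2 + ∑ j, L j := (integral_sq_le (ν i) (h2 i) ε).trans (by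
        gcongr
        exact Finset.single_le_sum (f := L) (fun j _ => hL0 j) (Finset.mem_univ i))
      have a4 : (t ^ 2 / 2 * v i) ^ 2 ≤ t ^ 4 / 4 * ((ε ^ 2 + ∑ j, L j) * v i) := by
        have : (t ^ 2 / 2 * v i) ^ 2 = t ^ 4 / 4 * (v i * v i) := by ring
        rw [this]; gcongr
      rw [norm_sub_rev] at a2
      have := norm_sub_le_norm_sub_add_norm_sub (charFun (ν i) t)
        (1 - ((t ^ 2 / 2 * v i : ℝ) : ℂ)) ((Real.exp (-(t ^ 2 / 2 * v i)) : ℝ) : ℂ)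
      linarith
    refine (Finset.sum_le_sum fun i _ => key i).trans (le_of_eq ?_)
    simp only [Finset.sum_add_distrib, Finset.mul_sum]

lemma lindeberg_charFun_tendsto {k : ℕ → ℕ} (ν : (n : ℕ) → Fin (k n) → Measure ℝ)
    [∀ n i, IsProbabilityMeasure (ν n i)]
    (h2 : ∀ n i, Integrable (fun x : ℝ => x ^ 2) (ν n i)) (h1 : ∀ n i, ∫ x, x ∂(ν n i) = 0)
    {σ2 : ℝ} (hV : Tendsto (fun n => ∑ i, ∫ x, x ^ 2 ∂(ν n i)) atTop (𝓝 σ2))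
    (hL : ∀ m : ℕ, Tendsto (fun n => ∑ i, ∫ x, (if 1 / ((m : ℝ) + 1) ≤ |x| then x ^ 2 else 0)
      ∂(ν n i)) atTop (𝓝 0)) (t : ℝ) :
    Tendsto (fun n => ∏ i, charFun (ν n i) t) atTop
      (𝓝 ((Real.exp (-(t ^ 2 / 2 * σ2)) : ℝ) : ℂ)) := by
  have hexp : Tendsto (fun n => ((Real.exp (-(t ^ 2 / 2 * ∑ i, ∫ x, x ^ 2 ∂(ν n i))) : ℝ) : ℂ))
      atTop (𝓝 ((Real.exp (-(t ^ 2 / 2 * σ2)) : ℝ) : ℂ)) :=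
    (((Complex.continuous_ofReal.comp Real.continuous_exp).tendsto _).comp
      ((hV.const_mul (t ^ 2 / 2)).neg))
  refine (tendsto_iff_of_dist ?_).2 hexp
  rw [Metric.tendsto_atTop]
  intro δ hδ
  -- the bound of `lindeberg_charFun_bound` converges, as `n → ∞`, to a quantity that is small
  -- when `ε = 1 / (m + 1)` is small
  have hsmall : Tendsto (fun m : ℕ => 4 * (1 / ((m : ℝ) + 1)) * |t| ^ 3 * σ2 + 4 * t ^ 2 * 0
      + t ^ 4 / 4 * (((1 / ((m : ℝ) + 1)) ^ 2 + 0) * σ2)) atTop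
      (𝓝 (4 * 0 * |t| ^ 3 * σ2 + 4 * t ^ 2 * 0 + t ^ 4 / 4 * ((0 ^ 2 + 0) * σ2))) := by
    have h0 := tendsto_one_div_add_atTop_nhds_zero_nat (𝕜 := ℝ)
    exact ((((h0.const_mul 4).mul_const _).mul_const _).add_const _).add
      ((((h0.pow 2).add_const 0).mul_const σ2).const_mul _)
  have : 4 * 0 * |t| ^ 3 * σ2 + 4 * t ^ 2 * 0 + t ^ 4 / 4 * ((0 ^ 2 + 0) * σ2) < δ := by
    simpa using hδ
  obtain ⟨m, hm⟩ := (hsmall.eventually_lt_const this).exists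
  have hlim := (((hV.const_mul (4 * (1 / ((m : ℝ) + 1)) * |t| ^ 3)).add
    ((hL m).const_mul (4 * t ^ 2))).add
      ((((hL m).const_add ((1 / ((m : ℝ) + 1)) ^ 2)).mul hV).const_mul (t ^ 4 / 4)))
  obtain ⟨N, hN⟩ := eventually_atTop.1 (hlim.eventually_lt_const hm)
  refine ⟨N, fun n hn => ?_⟩
  rw [Real.dist_eq, sub_zero, abs_of_nonneg dist_nonneg, dist_eq_norm]
  exact (lindeberg_charFun_bound (ν n) (h2 n) (h1 n) t _ (by positivity)).trans_lt (hN n hn)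

/-! ### Almost sure convergence along a common subsequence -/

/-- Countably many sequences converging in measure converge almost everywhere along one common
subsequence, by a diagonal choice and the Borel–Cantelli lemma. -/
lemma exists_common_subseq {Ω : Type*} [MeasurableSpace Ω] {P : Measure Ω}
    (f : ℕ → ℕ → Ω → ℝ) (g : ℕ → Ω → ℝ)
    (h : ∀ i, TendstoInMeasure P (f i) atTop (g i)) :
    ∃ φ : ℕ → ℕ, StrictMono φ ∧
      ∀ᵐ ω ∂P, ∀ i, Tendsto (fun n => f i (φ n) ω) atTop (𝓝 (g i ω)) := by
  have hev : ∀ j : ℕ, ∀ᶠ n in atTop, ∀ i ∈ Finset.range (j + 1),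
      P {x | (2 : ℝ≥0∞)⁻¹ ^ j ≤ edist (f i n x) (g i x)} ≤ (2⁻¹ : ℝ≥0∞) ^ j := by
    intro j
    rw [Filter.eventually_all_finset]
    intro i _
    have hε : (0 : ℝ≥0∞) < 2⁻¹ ^ j := ENNReal.pow_pos (by simp) _
    exact (h i _ hε).eventually_le_const hε
  obtain ⟨φ, hφ, hφ'⟩ := extraction_forall_of_eventually hev
  refine ⟨φ, hφ, ae_all_iff.2 fun i => ?_⟩
  let S : ℕ → Set Ω := fun j =>
    if i ≤ j then {x | (2 : ℝ≥0∞)⁻¹ ^ j ≤ edist (f i (φ j) x) (g i x)} else ∅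
  have hS : ∀ j, P (S j) ≤ (2⁻¹ : ℝ≥0∞) ^ j := by
    intro j
    by_cases hij : i ≤ j
    · simp only [S, if_pos hij]
      exact hφ' j i (Finset.mem_range.2 (by omega))
    · simp [S, if_neg hij]
  have hsum : ∑' j, P (S j) ≠ ∞ := by
    refine ne_top_of_le_ne_top ?_ (ENNReal.tsum_le_tsum hS)
    simp [ENNReal.tsum_geometric]
  filter_upwards [ae_eventually_notMem hsum] with ω hω
  rw [tendsto_iff_edist_tendsto_0]
  have hpow : Tendsto (fun j : ℕ => (2⁻¹ : ℝ≥0∞) ^ j) atTop (𝓝 0) :=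
    ENNReal.tendsto_pow_atTop_nhds_zero_of_lt_one (by simp)
  refine tendsto_of_tendsto_of_tendsto_of_le_of_le' tendsto_const_nhds hpow
    (Eventually.of_forall fun _ => zero_le) ?_
  filter_upwards [hω, eventually_ge_atTop i] with j hj hij
  simp only [S, if_pos hij, Set.mem_ofPred_eq, not_le] at hj
  exact hj.le

/-! ### Regular conditional distributions and conditional independence -/

lemma integral_condDistrib_spec {Ω E β : Type*} [MeasurableSpace Ω] (P : Measure Ω)
    [IsProbabilityMeasure P] [MeasurableSpace E] [StandardBorelSpace E] [Nonempty E]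
    [mβ : MeasurableSpace β] {X : Ω → β} (hX : Measurable X) {Y : Ω → E} (hY : Measurable Y)
    {f : E → ℝ} (hf : Measurable f) (hint : Integrable (fun ω => f (Y ω)) P) :
    (P[fun ω => f (Y ω) | mβ.comap X] =ᵐ[P] fun ω => ∫ y, f y ∂(condDistrib Y X P (X ω))) ∧
      ∀ᵐ ω ∂P, Integrable f (condDistrib Y X P (X ω)) := by
  refine ⟨condExp_ae_eq_integral_condDistrib hX hY.aemeasurable hf.stronglyMeasurable hint, ?_⟩
  have hi : Integrable (fun p : β × E => f p.2) (P.map fun a => (X a, Y a)) :=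
    (integrable_map_measure (hf.comp measurable_snd).aestronglyMeasurable
      (hX.prodMk hY).aemeasurable).2 hint
  exact hi.condDistrib_ae hX.aemeasurable hY.aemeasurable

/-- A random variable `Y` with values in a standard Borel space has a regular conditional distribution
given any sub-σ-algebra `m`: it is `condDistrib` of `Y` given the identity map from `Ω` to `Ω`
equipped with `m`. No assumption on `Ω` is needed. -/
lemma exists_regular_condDistrib {Ω E : Type*} [m0 : MeasurableSpace Ω] (P : Measure Ω)
    [IsProbabilityMeasure P] [MeasurableSpace E] [StandardBorelSpace E] [Nonempty E]
    (Y : Ω → E) (hY : Measurable Y) (m : MeasurableSpace Ω) (hm : m ≤ m0) :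
    ∃ κ : Ω → Measure E, (∀ ω, IsProbabilityMeasure (κ ω)) ∧
      ∀ f : E → ℝ, Measurable f → Integrable (fun ω => f (Y ω)) P →
        (P[fun ω => f (Y ω) | m] =ᵐ[P] fun ω => ∫ y, f y ∂(κ ω)) ∧
        ∀ᵐ ω ∂P, Integrable f (κ ω) := by
  -- two σ-algebras on `Ω` are in play, hence the explicit instance arguments
  refine ⟨fun ω => @condDistrib Ω Ω E _ _ _ m0 m Y id P _ ω, fun ω => inferInstance, ?_⟩
  intro f hf hint
  have h := @integral_condDistrib_spec Ω E Ω m0 P _ _ _ _ m id (measurable_id'' hm) Y hY f hf hint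
  rwa [MeasurableSpace.comap_id] at h

/-- Expansion of a product of complex numbers into real products, needed because conditional
independence is given for real-valued test functions only. -/
lemma prod_add_mul_I {ι : Type*} [Fintype ι] [DecidableEq ι] (a b : ι → ℝ) :
    ∏ i, ((a i : ℂ) + (b i : ℂ) * Complex.I) =
      ∑ s : Finset ι, (∏ i, if i ∈ s then (1 : ℂ) else Complex.I) *
        ((∏ i, (if i ∈ s then a i else b i) : ℝ) : ℂ) := by
  rw [Finset.prod_add, Finset.powerset_univ]
  refine Finset.sum_congr rfl fun s _ => ?_
  rw [Complex.ofReal_prod, ← Finset.prod_mul_distrib,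
    ← Finset.prod_mul_prod_compl s (fun i => (if i ∈ s then (1 : ℂ) else Complex.I) * _)]
  congr 1
  · exact Finset.prod_congr rfl fun i hi => by simp [hi]
  · rw [← Finset.compl_eq_univ_sdiff]
    refine Finset.prod_congr rfl fun i hi => ?_
    rw [Finset.mem_compl] at hi
    simp [hi, mul_comm]

lemma charFun_eq_cos_add_sin (ν : Measure ℝ) [IsProbabilityMeasure ν] (t : ℝ) :
    charFun ν t = ((∫ x, Real.cos (t * x) ∂ν : ℝ) : ℂ)
      + ((∫ x, Real.sin (t * x) ∂ν : ℝ) : ℂ) * Complex.I := by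
  have hc : Integrable (fun x : ℝ => Real.cos (t * x)) ν :=
    Integrable.mono' (integrable_const (1 : ℝ)) (Measurable.aestronglyMeasurable (by fun_prop))
      (ae_of_all _ fun x => Real.abs_cos_le_one _)
  have hs : Integrable (fun x : ℝ => Real.sin (t * x)) ν :=
    Integrable.mono' (integrable_const (1 : ℝ)) (Measurable.aestronglyMeasurable (by fun_prop))
      (ae_of_all _ fun x => Real.abs_sin_le_one _)
  rw [charFun_apply_real, ← integral_complex_ofReal, ← integral_complex_ofReal,
    ← integral_mul_const, ← integral_add hc.ofReal (hs.ofReal.mul_const _)]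
  congr 1
  funext x
  have := Complex.exp_mul_I ((t : ℂ) * x)
  rw [this]
  push_cast
  rfl

/-- If the integrals of all products of sines and cosines of the coordinates factor, then so does the
characteristic function of the sum of the coordinates. -/
lemma charFun_sum_eq_prod {k : ℕ} (κ : Measure (Fin k → ℝ)) [IsProbabilityMeasure κ] (t : ℝ)
    (h : ∀ s : Finset (Fin k),
      ∫ x, ∏ i, (if i ∈ s then Real.cos (t * x i) else Real.sin (t * x i)) ∂κ
        = ∏ i, (if i ∈ s then ∫ x, Real.cos (t * x i) ∂κ else ∫ x, Real.sin (t * x i) ∂κ)) :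
    charFun (κ.map (fun x => ∑ i, x i)) t = ∏ i, charFun (κ.map (fun x => x i)) t := by
  have hp : ∀ i : Fin k, IsProbabilityMeasure (κ.map (fun x => x i)) := fun i =>
    Measure.isProbabilityMeasure_map (measurable_pi_apply i).aemeasurable
  have hint : ∀ s : Finset (Fin k), Integrable
      (fun x : Fin k → ℝ => ∏ i, (if i ∈ s then Real.cos (t * x i) else Real.sin (t * x i))) κ := by
    intro s
    refine Integrable.mono' (integrable_const (1 : ℝ)) (Measurable.aestronglyMeasurable ?_)
      (ae_of_all _ fun x => ?_)
    · refine Finset.measurable_prod _ fun i _ => ?_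
      split_ifs <;> fun_prop
    · rw [Real.norm_eq_abs, Finset.abs_prod]
      refine Finset.prod_le_one (fun _ _ => abs_nonneg _) fun i _ => ?_
      split_ifs
      · exact Real.abs_cos_le_one _
      · exact Real.abs_sin_le_one _
  have hR : ∀ i : Fin k, charFun (κ.map (fun x => x i)) t
      = ((∫ x, Real.cos (t * x i) ∂κ : ℝ) : ℂ)
        + ((∫ x, Real.sin (t * x i) ∂κ : ℝ) : ℂ) * Complex.I := by
    intro i
    rw [charFun_eq_cos_add_sin,
      integral_map (measurable_pi_apply i).aemeasurable (by fun_prop),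
      integral_map (measurable_pi_apply i).aemeasurable (by fun_prop)]
  simp_rw [hR]
  rw [prod_add_mul_I, charFun_apply_real, integral_map (by fun_prop) (by fun_prop)]
  have hL : ∀ x : Fin k → ℝ, Complex.exp (t * ((∑ i, x i : ℝ) : ℂ) * Complex.I)
      = ∑ s : Finset (Fin k), (∏ i, if i ∈ s then (1 : ℂ) else Complex.I) *
        ((∏ i, (if i ∈ s then Real.cos (t * x i) else Real.sin (t * x i)) : ℝ) : ℂ) := by
    intro x
    rw [← prod_add_mul_I, Complex.ofReal_sum, Finset.mul_sum, Finset.sum_mul, Complex.exp_sum]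
    refine Finset.prod_congr rfl fun i _ => ?_
    rw [Complex.exp_mul_I]
    push_cast
    rfl
  simp_rw [hL]
  rw [integral_finsetSum _ fun s _ => (hint s).ofReal.const_mul _]
  refine Finset.sum_congr rfl fun s _ => ?_
  rw [integral_const_mul, integral_complex_ofReal, h s]

/-- Conditional independence factors the characteristic function of the conditional law of the sum.
The exceptional null set does not depend on `t`: the identity is obtained for rational `t` and
extended by continuity. -/
lemma ae_charFun_sum_eq_prod {Ω : Type*} [m0 : MeasurableSpace Ω] {P : Measure Ω}
    [IsProbabilityMeasure P] {k : ℕ} {X : Fin k → Ω → ℝ}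
    (hX : Measurable (fun ω i => X i ω)) {m : MeasurableSpace Ω}
    (hind : ∀ g : Fin k → ℝ → ℝ,
      (∀ i, Measurable (g i)) → (∀ i, ∃ C, ∀ x, |g i x| ≤ C) →
      (P[(fun ω => ∏ i, g i (X i ω)) | m]
        =ᵐ[P] fun ω => ∏ i, (P[(fun ω' => g i (X i ω')) | m]) ω))
    (κ : Ω → Measure (Fin k → ℝ)) (hp : ∀ ω, IsProbabilityMeasure (κ ω))
    (hκ : ∀ f : (Fin k → ℝ) → ℝ, Measurable f → Integrable (fun ω => f (fun i => X i ω)) P →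
        (P[fun ω => f (fun i => X i ω) | m] =ᵐ[P] fun ω => ∫ y, f y ∂(κ ω)) ∧
        ∀ᵐ ω ∂P, Integrable f (κ ω)) :
    ∀ᵐ ω ∂P, ∀ t, charFun ((κ ω).map (fun x => ∑ i, x i)) t
      = ∏ i, charFun ((κ ω).map (fun x => x i)) t := by
  have hbdd : ∀ f : (Fin k → ℝ) → ℝ, Measurable f → (∀ x, |f x| ≤ 1) →
      P[fun ω => f (fun i => X i ω) | m] =ᵐ[P] fun ω => ∫ y, f y ∂(κ ω) := fun f hf hb =>
    (hκ f hf (Integrable.mono' (integrable_const (1 : ℝ))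
      (hf.comp hX).aestronglyMeasurable (ae_of_all _ fun ω => hb _))).1
  have hrat : ∀ᵐ ω ∂P, ∀ q : ℚ, ∀ s : Finset (Fin k),
      ∫ x, ∏ i, (if i ∈ s then Real.cos (q * x i) else Real.sin (q * x i)) ∂(κ ω)
        = ∏ i, (if i ∈ s then ∫ x, Real.cos (q * x i) ∂(κ ω)
            else ∫ x, Real.sin (q * x i) ∂(κ ω)) := by
    rw [ae_all_iff]; intro q
    rw [ae_all_iff]; intro s
    let g : Fin k → ℝ → ℝ := fun i y => if i ∈ s then Real.cos (q * y) else Real.sin (q * y)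
    have hg : ∀ i, Measurable (g i) := by
      intro i; dsimp only [g]; split_ifs <;> fun_prop
    have hg1 : ∀ i y, |g i y| ≤ 1 := by
      intro i y
      dsimp only [g]
      split_ifs
      · exact Real.abs_cos_le_one _
      · exact Real.abs_sin_le_one _
    have e1 := hbdd (fun x => ∏ i, g i (x i))
      (Finset.measurable_prod _ fun i _ => (hg i).comp (measurable_pi_apply i)) fun x => by
        rw [Finset.abs_prod]
        exact Finset.prod_le_one (fun _ _ => abs_nonneg _) fun i _ => hg1 i _
    have e2 : ∀ᵐ ω ∂P, ∀ i, (P[(fun ω' => g i (X i ω')) | m]) ω = ∫ x, g i (x i) ∂(κ ω) :=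
      ae_all_iff.2 fun i => hbdd (fun x => g i (x i)) ((hg i).comp (measurable_pi_apply i))
        fun x => hg1 i _
    filter_upwards [e1, e2, hind g hg fun i => ⟨1, hg1 i⟩] with ω h1 h2 h3
    rw [h1] at h3
    simp only [h2] at h3
    refine h3.trans (Finset.prod_congr rfl fun i _ => ?_)
    dsimp only [g]
    split_ifs <;> rfl
  filter_upwards [hrat] with ω hω
  have := hp ω
  have hp1 : IsProbabilityMeasure ((κ ω).map (fun x => ∑ i, x i)) :=
    Measure.isProbabilityMeasure_map (by fun_prop)
  have hp2 : ∀ i : Fin k, IsProbabilityMeasure ((κ ω).map (fun x => x i)) := fun i =>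
    Measure.isProbabilityMeasure_map (measurable_pi_apply i).aemeasurable
  have hc : (fun t : ℝ => charFun ((κ ω).map (fun x => ∑ i, x i)) t)
      = fun t => ∏ i, charFun ((κ ω).map (fun x => x i)) t := by
    refine Continuous.ext_on (Rat.denseRange_cast (𝕜 := ℝ)) (by fun_prop)
      (continuous_finsetProd _ fun i _ => by fun_prop) ?_
    rintro _ ⟨q, rfl⟩
    exact charFun_sum_eq_prod (κ ω) q (hω q)
  exact fun t => congrFun hc t

/-! ### The conditional Lindeberg theorem -/

/-- Conditional Lindeberg central limit theorem: `Z n | ℱ n ⇒ N(0, σ2)`. -/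
theorem cond_lindeberg_clt
    {Ω : Type*} [m0 : MeasurableSpace Ω]
    (P : Measure Ω) [IsProbabilityMeasure P]
    (k : ℕ → ℕ) (X : (n : ℕ) → Fin (k n) → Ω → ℝ)
    (hXmeas : ∀ n i, Measurable (X n i))
    (ℱ : ℕ → MeasurableSpace Ω) (hℱ : ∀ n, ℱ n ≤ m0)
    (hCondIndep : ∀ (n : ℕ) (g : Fin (k n) → ℝ → ℝ),
      (∀ i, Measurable (g i)) → (∀ i, ∃ C, ∀ x, |g i x| ≤ C) →
      (P[(fun ω => ∏ i, g i (X n i ω)) | ℱ n]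
        =ᵐ[P] fun ω => ∏ i, (P[(fun ω' => g i (X n i ω')) | ℱ n]) ω))
    (hXsq : ∀ n i, Integrable (fun ω => X n i ω ^ 2) P)
    (hcentred : ∀ n i, P[X n i | ℱ n] =ᵐ[P] 0)
    (σ2 : ℝ) (hσ2 : 0 < σ2)
    (hvar : TendstoInMeasure P
      (fun n ω => ∑ i, (P[(fun ω' => X n i ω' ^ 2) | ℱ n]) ω) atTop (fun _ => σ2))
    (hlind : ∀ ε : ℝ, 0 < ε →
      TendstoInMeasure P
        (fun n ω => ∑ i,
          (P[(fun ω' => if ε ≤ |X n i ω'| then X n i ω' ^ 2 else 0) | ℱ n]) ω)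
        atTop (fun _ => (0 : ℝ))) (f : BoundedContinuousFunction ℝ ℝ) :
    TendstoInMeasure P (fun n => P[(fun ω => f (∑ i, X n i ω)) | ℱ n]) atTop
      (fun _ => ∫ x, f x ∂(gaussianReal 0 (Real.toNNReal σ2))) := by
  have hXv : ∀ n, Measurable (fun ω i => X n i ω) := fun n => measurable_pi_lambda _ (hXmeas n)
  choose κ hκp hκ using fun n =>
    exists_regular_condDistrib P (fun ω i => X n i ω) (hXv n) (ℱ n) (hℱ n)
  rw [exists_seq_tendstoInMeasure_atTop_iff
    (fun n => (stronglyMeasurable_condExp.mono (hℱ n)).aestronglyMeasurable)]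
  intro ns hns
  -- index `0` carries the variance condition, index `m + 1` the Lindeberg condition for
  -- `ε = 1 / (m + 1)`
  let F : ℕ → ℕ → Ω → ℝ := fun m j ω => match m with
    | 0 => ∑ i, (P[(fun ω' => X (ns j) i ω' ^ 2) | ℱ (ns j)]) ω
    | m + 1 => ∑ i, (P[(fun ω' => if 1 / ((m : ℝ) + 1) ≤ |X (ns j) i ω'|
        then X (ns j) i ω' ^ 2 else 0) | ℱ (ns j)]) ω
  let G : ℕ → Ω → ℝ := fun m _ => match m with
    | 0 => σ2
    | _ + 1 => 0
  obtain ⟨φ, hφ, hae⟩ := exists_common_subseq F G (P := P) (by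
    rintro (_ | m)
    · exact hvar.comp hns.tendsto_atTop
    · exact (hlind (1 / ((m : ℝ) + 1)) (by positivity)).comp hns.tendsto_atTop)
  refine ⟨φ, hφ, ?_⟩
  have hsq : ∀ᵐ ω ∂P, ∀ n i,
      (P[(fun ω' => X n i ω' ^ 2) | ℱ n]) ω = ∫ x, x i ^ 2 ∂(κ n ω) ∧
      Integrable (fun x : Fin (k n) → ℝ => x i ^ 2) (κ n ω) := by
    refine ae_all_iff.2 fun n => ae_all_iff.2 fun i => ?_
    obtain ⟨h1, h2⟩ := hκ n (fun x => x i ^ 2) ((measurable_pi_apply i).pow_const 2) (hXsq n i)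
    filter_upwards [h1, h2] with ω h1 h2 using ⟨h1, h2⟩
  have hmean : ∀ᵐ ω ∂P, ∀ n i, ∫ x, x i ∂(κ n ω) = 0 := by
    refine ae_all_iff.2 fun n => ae_all_iff.2 fun i => ?_
    have hi : Integrable (X n i) P :=
      ((memLp_two_iff_integrable_sq (hXmeas n i).aestronglyMeasurable).2 (hXsq n i)).integrable
        (by norm_num)
    have h1 := (hκ n (fun x => x i) (measurable_pi_apply i) hi).1
    filter_upwards [h1, hcentred n i] with ω h1 h2
    rw [← h1]; exact h2
  have hmtrunc : ∀ ε : ℝ, Measurable (fun x : ℝ => if ε ≤ |x| then x ^ 2 else 0) := fun ε =>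
    Measurable.ite (measurableSet_le measurable_const (by fun_prop)) (by fun_prop)
      measurable_const
  have htrunc : ∀ᵐ ω ∂P, ∀ n i, ∀ m : ℕ,
      (P[(fun ω' => if 1 / ((m : ℝ) + 1) ≤ |X n i ω'| then X n i ω' ^ 2 else 0) | ℱ n]) ω
        = ∫ x, (if 1 / ((m : ℝ) + 1) ≤ |x i| then x i ^ 2 else 0) ∂(κ n ω) := by
    refine ae_all_iff.2 fun n => ae_all_iff.2 fun i => ae_all_iff.2 fun m => ?_
    refine (hκ n (fun x => if 1 / ((m : ℝ) + 1) ≤ |x i| then x i ^ 2 else 0)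
      ((hmtrunc _).comp (measurable_pi_apply i)) ?_).1
    refine (hXsq n i).mono ((hmtrunc _).comp (hXmeas n i)).aestronglyMeasurable
      (ae_of_all _ fun ω => ?_)
    split_ifs <;> simp [sq_nonneg]
  have hf : ∀ᵐ ω ∂P, ∀ n, (P[(fun ω => f (∑ i, X n i ω)) | ℱ n]) ω
      = ∫ x, f (∑ i, x i) ∂(κ n ω) := by
    refine ae_all_iff.2 fun n => ?_
    have hm : Measurable (fun x : Fin (k n) → ℝ => f (∑ i, x i)) :=
      f.continuous.measurable.comp (by fun_prop)
    exact (hκ n _ hm (Integrable.mono' (integrable_const ‖f‖)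
      (hm.comp (hXv n)).aestronglyMeasurable (ae_of_all _ fun ω => f.norm_coe_le_norm _))).1
  have hchar : ∀ᵐ ω ∂P, ∀ n, ∀ t, charFun ((κ n ω).map (fun x => ∑ i, x i)) t
      = ∏ i, charFun ((κ n ω).map (fun x => x i)) t :=
    ae_all_iff.2 fun n => ae_charFun_sum_eq_prod (hXv n) (hCondIndep n) (κ n) (hκp n) (hκ n)
  filter_upwards [hae, hsq, hmean, htrunc, hf, hchar] with ω hae hsq hmean htrunc hf hchar
  have hp : ∀ n (i : Fin (k n)), IsProbabilityMeasure ((κ n ω).map (fun x => x i)) := fun n i =>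
    have := hκp n ω
    Measure.isProbabilityMeasure_map (measurable_pi_apply i).aemeasurable
  have hps : ∀ n, IsProbabilityMeasure ((κ n ω).map (fun x => ∑ i, x i)) := fun n =>
    have := hκp n ω
    Measure.isProbabilityMeasure_map (by fun_prop)
  have hint2 : ∀ n (i : Fin (k n)),
      Integrable (fun x : ℝ => x ^ 2) ((κ n ω).map (fun x => x i)) := fun n i =>
    (integrable_map_measure (measurable_id.pow_const 2 :
        Measurable fun x : ℝ => x ^ 2).aestronglyMeasurable
      (measurable_pi_apply i).aemeasurable).2 (hsq n i).2
  have hcf := lindeberg_charFun_tendsto (k := fun j => k (ns (φ j))) (σ2 := σ2)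
    (fun j i => (κ (ns (φ j)) ω).map (fun x => x i))
    (fun j i => hint2 _ i)
    (fun j i => by
      rw [integral_map (measurable_pi_apply i).aemeasurable (by fun_prop)]; exact hmean _ i)
    (by
      have := hae 0
      simp only [F, G, (hsq _ _).1] at this
      refine this.congr fun j => Finset.sum_congr rfl fun i _ => ?_
      rw [integral_map (measurable_pi_apply i).aemeasurable (by fun_prop)])
    (fun m => by
      have := hae (m + 1)
      simp only [F, G, htrunc] at this
      refine this.congr fun j => Finset.sum_congr rfl fun i _ => ?_
      rw [integral_map (measurable_pi_apply i).aemeasurable (hmtrunc _).aestronglyMeasurable])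
  have hweak : Tendsto (β := ProbabilityMeasure ℝ)
      (fun j => ⟨(κ (ns (φ j)) ω).map (fun x => ∑ i, x i), hps _⟩) atTop
      (𝓝 ⟨gaussianReal 0 (Real.toNNReal σ2), inferInstance⟩) := by
    refine ProbabilityMeasure.tendsto_of_tendsto_charFun fun t => ?_
    simp only [ProbabilityMeasure.coe_mk, hchar, charFun_gaussianReal]
    convert hcf t using 2
    rw [Real.coe_toNNReal _ hσ2.le]
    push_cast
    congr 1
    ring
  have hfin := (ProbabilityMeasure.tendsto_iff_forall_integral_tendsto.1 hweak) f
  refine hfin.congr fun j => ?_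
  rw [hf]
  simp only [ProbabilityMeasure.coe_mk]
  rw [integral_map (by fun_prop) f.continuous.aestronglyMeasurable]

/-! ### Removing the perturbation -/

/-- Conditional weak convergence to a deterministic law implies unconditional convergence in
distribution, by dominated convergence along almost surely convergent subsequences. -/
lemma tendstoInDistribution_of_condExp {Ω : Type*} [m0 : MeasurableSpace Ω] (P : Measure Ω)
    [IsProbabilityMeasure P] (Z : ℕ → Ω → ℝ) (hZ : ∀ n, Measurable (Z n))
    (ℱ : ℕ → MeasurableSpace Ω) (hℱ : ∀ n, ℱ n ≤ m0) (μ : Measure ℝ) [IsProbabilityMeasure μ]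
    (h : ∀ f : BoundedContinuousFunction ℝ ℝ,
      TendstoInMeasure P (fun n => P[(fun ω => f (Z n ω)) | ℱ n]) atTop
        (fun _ => ∫ x, f x ∂μ)) :
    TendstoInDistribution Z atTop id (fun _ => P) μ := by
  refine ⟨fun n => (hZ n).aemeasurable, aemeasurable_id, ?_⟩
  refine ProbabilityMeasure.tendsto_iff_forall_integral_tendsto.2 fun f => ?_
  have key : Tendsto (fun n => ∫ ω, f (Z n ω) ∂P) atTop (𝓝 (∫ x, f x ∂μ)) := by
    refine tendsto_of_subseq_tendsto fun ns hns => ?_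
    obtain ⟨φ, -, hae⟩ := ((h f).comp hns).exists_seq_tendsto_ae
    refine ⟨φ, ?_⟩
    have hbd : ∀ n, ∀ᵐ ω ∂P, ‖(P[(fun ω => f (Z n ω)) | ℱ n]) ω‖ ≤ ‖f‖ := by
      intro n
      have := ae_bdd_abs_condExp_of_ae_bdd_abs (m := ℱ n) (μ := P) (R := ‖f‖)
        (f := fun ω => f (Z n ω)) (ae_of_all _ fun ω => f.norm_coe_le_norm _)
      filter_upwards [this] with ω hω using hω
    have := tendsto_integral_of_dominated_convergence (μ := P) (fun _ => ‖f‖)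
      (fun j => (stronglyMeasurable_condExp.mono (hℱ (ns (φ j)))).aestronglyMeasurable)
      (integrable_const _) (fun j => hbd (ns (φ j))) hae
    simp only [integral_condExp (hℱ _), integral_const, probReal_univ, one_smul] at this
    exact this
  simp only [ProbabilityMeasure.coe_mk, Measure.map_id]
  refine key.congr fun n => ?_
  rw [integral_map (hZ n).aemeasurable f.continuous.aestronglyMeasurable]

/-- By Slutsky's theorem `(Z n, T n)` converges in distribution to `(Z, c)`; the test function
`(z, t) ↦ |f (z + t) - f (z + c)|` has integral `0` under the limit law. -/
lemma tendsto_integral_abs_sub_of_slutsky {Ω : Type*} [m0 : MeasurableSpace Ω] (P : Measure Ω)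
    [IsProbabilityMeasure P] (Z T : ℕ → Ω → ℝ) (hTm : ∀ n, Measurable (T n))
    (μ : Measure ℝ) [IsProbabilityMeasure μ]
    (hZT : TendstoInDistribution Z atTop id (fun _ => P) μ) (c : ℝ)
    (hT : TendstoInMeasure P T atTop (fun _ => c)) (f : BoundedContinuousFunction ℝ ℝ) :
    Tendsto (fun n => ∫ ω, |f (Z n ω + T n ω) - f (Z n ω + c)| ∂P) atTop (𝓝 0) := by
  have hpair := hZT.prodMk_of_tendstoInMeasure_const Z T id hT (fun n => (hTm n).aemeasurable)
  let g : BoundedContinuousFunction (ℝ × ℝ) ℝ := BoundedContinuousFunction.ofNormedAddCommGroup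
    (fun p => |f (p.1 + p.2) - f (p.1 + c)|) (by fun_prop) (‖f‖ + ‖f‖) (fun p => by
      rw [Real.norm_eq_abs, abs_abs]
      exact (norm_sub_le _ _).trans (add_le_add (f.norm_coe_le_norm _) (f.norm_coe_le_norm _)))
  have h := (ProbabilityMeasure.tendsto_iff_forall_integral_tendsto.1 hpair.tendsto) g
  simp only [ProbabilityMeasure.coe_mk] at h
  rw [integral_map hpair.aemeasurable_limit g.continuous.aestronglyMeasurable] at h
  have h0 : ∫ x, g (id x, c) ∂μ = 0 := by simp [g]
  rw [h0] at h
  refine h.congr fun n => ?_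
  rw [integral_map (hpair.forall_aemeasurable n) g.continuous.aestronglyMeasurable]
  rfl

lemma tendstoInMeasure_of_sub_zero {Ω : Type*} [MeasurableSpace Ω] {P : Measure Ω}
    [IsFiniteMeasure P] {u w : ℕ → Ω → ℝ} {g : Ω → ℝ}
    (hw : ∀ n, AEStronglyMeasurable (w n) P)
    (hu : TendstoInMeasure P u atTop g) (h : TendstoInMeasure P (w - u) atTop 0) :
    TendstoInMeasure P w atTop g := by
  rw [exists_seq_tendstoInMeasure_atTop_iff hw]
  intro ns hns
  obtain ⟨φ, hφ, hae⟩ := exists_common_subseq (P := P)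
    (fun m j => if m = 0 then u (ns j) else (w - u) (ns j)) (fun m => if m = 0 then g else 0)
    (fun m => by
      by_cases hm : m = 0
      · simp only [hm, if_true]
        exact hu.comp hns.tendsto_atTop
      · simp only [hm, if_false]
        exact h.comp hns.tendsto_atTop)
  refine ⟨φ, hφ, ?_⟩
  filter_upwards [hae] with ω hω
  have := (hω 0).add (hω 1)
  simpa using this

/-- conditional CLT with a perturbation converging in probability.
Under the hypotheses of the conditional Lindeberg CLT for the triangular array
`{X_{n,i}}` given the sub-σ-algebras `ℱ_n`, if `T_n → c` in probability then, with
`Z_n = Σ_i X_{n,i}`, for every bounded continuous `f`,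
`E[f(Z_n + T_n) | ℱ_n] → E[f(σZ + c)]` in probability, i.e.
`Z_n + T_n | ℱ_n ⇒ N(c, σ²)`. -/
theorem stmt17
    {Ω : Type*} [m0 : MeasurableSpace Ω]
    (P : Measure Ω) [IsProbabilityMeasure P]
    (k : ℕ → ℕ) (X : (n : ℕ) → Fin (k n) → Ω → ℝ)
    (hXmeas : ∀ n i, Measurable (X n i))
    (ℱ : ℕ → MeasurableSpace Ω) (hℱ : ∀ n, ℱ n ≤ m0)
    (hCondIndep : ∀ (n : ℕ) (g : Fin (k n) → ℝ → ℝ),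
      (∀ i, Measurable (g i)) → (∀ i, ∃ C, ∀ x, |g i x| ≤ C) →
      (P[(fun ω => ∏ i, g i (X n i ω)) | ℱ n]
        =ᵐ[P] fun ω => ∏ i, (P[(fun ω' => g i (X n i ω')) | ℱ n]) ω))
    (hXsq : ∀ n i, Integrable (fun ω => X n i ω ^ 2) P)
    (hcentred : ∀ n i, P[X n i | ℱ n] =ᵐ[P] 0)
    (σ2 : ℝ) (hσ2 : 0 < σ2)
    (hvar : TendstoInMeasure P
      (fun n ω => ∑ i, (P[(fun ω' => X n i ω' ^ 2) | ℱ n]) ω) atTop (fun _ => σ2))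
    (hlind : ∀ ε : ℝ, 0 < ε →
      TendstoInMeasure P
        (fun n ω => ∑ i,
          (P[(fun ω' => if ε ≤ |X n i ω'| then X n i ω' ^ 2 else 0) | ℱ n]) ω)
        atTop (fun _ => (0 : ℝ)))
    (T : ℕ → Ω → ℝ) (hTmeas : ∀ n, Measurable (T n))
    (c : ℝ) (hT : TendstoInMeasure P T atTop (fun _ => c)) :
    ∀ f : BoundedContinuousFunction ℝ ℝ,
      TendstoInMeasure P
        (fun n => P[(fun ω => f ((∑ i, X n i ω) + T n ω)) | ℱ n]) atTop
        (fun _ => ∫ x, f x ∂(gaussianReal c (Real.toNNReal σ2))) := by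
  intro f
  have hZm : ∀ n, Measurable (fun ω => ∑ i, X n i ω) := fun n =>
    Finset.measurable_sum _ fun i _ => hXmeas n i
  have hclt := cond_lindeberg_clt P k X hXmeas ℱ hℱ hCondIndep hXsq hcentred σ2 hσ2 hvar hlind
  let fc : BoundedContinuousFunction ℝ ℝ :=
    f.compContinuous ⟨fun x => x + c, by fun_prop⟩
  have hshift : ∫ x, fc x ∂(gaussianReal 0 (Real.toNNReal σ2))
      = ∫ x, f x ∂(gaussianReal c (Real.toNNReal σ2)) := by
    have := gaussianReal_map_add_const (μ := 0) (v := Real.toNNReal σ2) c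
    rw [zero_add] at this
    rw [← this, integral_map (by fun_prop) f.continuous.aestronglyMeasurable]
    rfl
  have hdist := tendstoInDistribution_of_condExp P (fun n ω => ∑ i, X n i ω) hZm ℱ hℱ _ hclt
  have hD := tendsto_integral_abs_sub_of_slutsky P _ T hTmeas _ hdist c hT f
  rw [← hshift]
  have hint : ∀ U : Ω → ℝ, Measurable U → Integrable (fun ω => f (U ω)) P := fun U hU =>
    Integrable.mono' (integrable_const ‖f‖) (f.continuous.measurable.comp hU).aestronglyMeasurable
      (ae_of_all _ fun ω => f.norm_coe_le_norm _)
  have hi1 : ∀ n, Integrable (fun ω => f ((∑ i, X n i ω) + T n ω)) P := fun n =>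
    hint _ ((hZm n).add (hTmeas n))
  have hi2 : ∀ n, Integrable (fun ω => f ((∑ i, X n i ω) + c)) P := fun n =>
    hint _ ((hZm n).add_const c)
  refine tendstoInMeasure_of_sub_zero
    (fun n => (stronglyMeasurable_condExp.mono (hℱ n)).aestronglyMeasurable) (hclt fc) ?_
  refine tendstoInMeasure_of_tendsto_eLpNorm (p := 1) one_ne_zero
    (fun n => ((stronglyMeasurable_condExp.mono (hℱ n)).sub
      (stronglyMeasurable_condExp.mono (hℱ n))).aestronglyMeasurable)
    aestronglyMeasurable_zero ?_
  have hD' : Tendsto (fun n => ENNReal.ofReal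
      (∫ ω, |f ((∑ i, X n i ω) + T n ω) - f ((∑ i, X n i ω) + c)| ∂P)) atTop (𝓝 0) := by
    simpa using ENNReal.tendsto_ofReal hD
  refine tendsto_of_tendsto_of_tendsto_of_le_of_le tendsto_const_nhds hD'
    (fun _ => zero_le) fun n => ?_
  rw [sub_zero]
  calc eLpNorm (P[(fun ω => f ((∑ i, X n i ω) + T n ω)) | ℱ n]
          - P[(fun ω => fc (∑ i, X n i ω)) | ℱ n]) 1 P
      = eLpNorm (P[(fun ω => f ((∑ i, X n i ω) + T n ω)) - (fun ω => f ((∑ i, X n i ω) + c))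
          | ℱ n]) 1 P := eLpNorm_congr_ae (condExp_sub (hi1 n) (hi2 n) (ℱ n)).symm
    _ ≤ eLpNorm ((fun ω => f ((∑ i, X n i ω) + T n ω)) - (fun ω => f ((∑ i, X n i ω) + c))) 1 P :=
        eLpNorm_condExp_le_eLpNorm _ le_rfl
    _ = _ := by
        rw [eLpNorm_one_eq_lintegral_enorm, ← ofReal_integral_norm_eq_lintegral_enorm
          ((hi1 n).sub (hi2 n))]
        rfl
end

section
/- Let (𝒰, 𝒜) and (Θ, 𝒯) be measurable spaces, π̄ a probability measure on Θ × 𝒰 with disintegration π̄(dθ, du) = π̄(du) π̄(dθ | u), and let K be a Markov kernel on 𝒰. Let ν be a σ-finite measure on Θ such that each conditional π̄(dθ|u) has density π̄(θ|u) > 0 with respect to ν and the proposal kernel has density q(θ, dθ') = q(θ, θ') ν(dθ') with q(θ, θ') > 0. For measurable functions r : 𝒰² → [0,∞) and g : 𝒰² → [0,∞), define Δ_{Q̄}(g) = ∬ π̄(dθ, du) ∬ K(u, du') π̄(dθ' | u') min{1, r(u,u')} g(u,u') and Δ_Q(g) = ∬ π̄(dθ, du) ∬ K(u, du') q(θ,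 dθ') min{ 1, r(u,u') · [π̄(θ'|u') q(θ',θ)] / [π̄(θ|u) q(θ,θ')] } g(u,u'). Then Δ_{Q̄}(g) ≥ Δ_Q(g). -/
open MeasureTheory
open scoped ENNReal

/-!
For fixed `u, u'`, the part of the pseudo-marginal expectation coming from the auxiliary
variables is `∬ π̄(θ|u) q(θ,θ') min{1, r X} g ν(dθ) ν(dθ')` with
`X = π̄(θ'|u') q(θ',θ) / (π̄(θ|u) q(θ,θ'))`. Since `π̄(θ|u) q(θ,θ')` is a probability density on
`Θ × Θ` and multiplying it by `X` gives the reversed probability density `π̄(θ'|u') q(θ',θ)`,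
this is at most both `g` and `r g`, hence at most `min{1, r} g`. That is Jensen's inequality for
`x ↦ min{1, r x}` together with `E[X] = 1`; it is `lintegral_accept_le`. The minimum `min{1, r} g`
is what the ideal scheme gives, so integrating over `π̄(du) K(u, du')` concludes. Expectations
under `π̄` are disintegrated by `lintegral_disintegration`, and Tonelli's theorem moves the
`θ`-integral inside the `u'`-integral.
-/

lemma lintegral_ofReal_eq_one {Θ : Type*} [MeasurableSpace Θ] {ν : Measure Θ} {f : Θ → ℝ}
    (hpos : ∀ θ, 0 < f θ) (hint : (∫ θ, f θ ∂ν) = 1) :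
    ∫⁻ θ, ENNReal.ofReal (f θ) ∂ν = 1 := by
  rw [← ofReal_integral_eq_lintegral_ofReal (integrable_of_integral_eq_one hint)
    (ae_of_all _ fun θ => (hpos θ).le), hint, ENNReal.ofReal_one]

/-- The acceptance probability averaged over the auxiliary variables `θ, θ'` is at most the ideal
one. Here `a = π̄(·|u)`, `b = π̄(·|u')`, `s = r(u, u')` and `c = g(u, u')`. -/
lemma lintegral_accept_le {Θ : Type*} [MeasurableSpace Θ] (ν : Measure Θ) [SigmaFinite ν]
    (a b : Θ → ℝ) (hb : Measurable b)
    (hapos : ∀ θ, 0 < a θ) (hbpos : ∀ θ, 0 < b θ)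
    (haint : (∫ θ, a θ ∂ν) = 1) (hbint : (∫ θ, b θ ∂ν) = 1)
    (q : Θ → Θ → ℝ) (hq : Measurable (Function.uncurry q))
    (hqpos : ∀ θ θ', 0 < q θ θ') (hqint : ∀ θ, (∫ θ', q θ θ' ∂ν) = 1)
    (s c : ℝ) (hs : 0 ≤ s) (hc : 0 ≤ c) :
    ∫⁻ θ, ENNReal.ofReal (a θ) * ∫⁻ θ', ENNReal.ofReal (q θ θ') *
        ENNReal.ofReal (min 1 (s * (b θ' * q θ' θ) / (a θ * q θ θ')) * c) ∂ν ∂ν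
      ≤ ENNReal.ofReal (min 1 s * c) := by
  have hq1 : ∀ θ, ∫⁻ θ', ENNReal.ofReal (q θ θ') ∂ν = 1 := fun θ =>
    lintegral_ofReal_eq_one (hqpos θ) (hqint θ)
  rcases le_total 1 s with h | h
  · rw [min_eq_left h, one_mul]
    calc _ ≤ ∫⁻ θ, ENNReal.ofReal (a θ) * ENNReal.ofReal c ∂ν := by
          refine lintegral_mono fun θ => mul_le_mul_right ?_ _
          calc _ ≤ ∫⁻ θ', ENNReal.ofReal (q θ θ') * ENNReal.ofReal c ∂ν := by
                refine lintegral_mono fun θ' => mul_le_mul_right ?_ _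
                exact ENNReal.ofReal_le_ofReal (mul_le_of_le_one_left hc (min_le_left _ _))
            _ = _ := by
                rw [lintegral_mul_const' _ _ ENNReal.ofReal_ne_top, hq1, one_mul]
      _ = _ := by
          rw [lintegral_mul_const' _ _ ENNReal.ofReal_ne_top,
            lintegral_ofReal_eq_one hapos haint, one_mul]
  · rw [min_eq_right h]
    calc _ ≤ ∫⁻ θ, ∫⁻ θ', ENNReal.ofReal (s * c) *
              (ENNReal.ofReal (b θ') * ENNReal.ofReal (q θ' θ)) ∂ν ∂ν := by
          refine lintegral_mono fun θ => ?_
          rw [← lintegral_const_mul' _ _ ENNReal.ofReal_ne_top]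
          refine lintegral_mono fun θ' => ?_
          have ha := hapos θ
          have hbθ := hbpos θ'
          have h1 := hqpos θ θ'
          have h2 := hqpos θ' θ
          rw [← ENNReal.ofReal_mul h1.le, ← ENNReal.ofReal_mul ha.le,
            ← ENNReal.ofReal_mul hbθ.le, ← ENNReal.ofReal_mul (mul_nonneg hs hc)]
          refine ENNReal.ofReal_le_ofReal ?_
          calc _ ≤ a θ * (q θ θ' * (s * (b θ' * q θ' θ) / (a θ * q θ θ') * c)) := by
                gcongr
                exact min_le_right _ _
            _ = _ := by field_simp
      _ = ∫⁻ θ', ∫⁻ θ, ENNReal.ofReal (s * c) *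
              (ENNReal.ofReal (b θ') * ENNReal.ofReal (q θ' θ)) ∂ν ∂ν := by
          refine lintegral_lintegral_swap (Measurable.aemeasurable ?_)
          have hq' : Measurable fun z : Θ × Θ => q z.2 z.1 := hq.comp measurable_swap
          simp only [Function.uncurry_def]
          fun_prop
      _ = _ := by
          simp_rw [lintegral_const_mul' _ _ ENNReal.ofReal_ne_top, hq1, mul_one]
          rw [lintegral_ofReal_eq_one hbpos hbint, mul_one]

/-- Expectations under a measure on `Θ × 𝒰` with marginal `m` and conditional `ν`-densities `p`. -/
lemma lintegral_disintegration {Θ 𝒰 : Type*} [MeasurableSpace Θ] [MeasurableSpace 𝒰]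
    (m : Measure 𝒰) (ν : Measure Θ) [SigmaFinite ν]
    (p : 𝒰 → Θ → ℝ≥0∞) (hp : Measurable (Function.uncurry p))
    (F : Θ × 𝒰 → ℝ≥0∞) (hF : Measurable F) :
    ∫⁻ x, F x ∂(m.bind fun u => Measure.map (fun θ => (θ, u)) (ν.withDensity (p u)))
      = ∫⁻ u, ∫⁻ θ, p u θ * F (θ, u) ∂ν ∂m := by
  have key : ∀ (G : Θ × 𝒰 → ℝ≥0∞), Measurable G → ∀ u,
      ∫⁻ x, G x ∂(Measure.map (fun θ => (θ, u)) (ν.withDensity (p u)))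
        = ∫⁻ θ, p u θ * G (θ, u) ∂ν := by
    intro G hG u
    rw [lintegral_map hG measurable_prodMk_right]
    exact lintegral_withDensity_eq_lintegral_mul _ (hp.comp measurable_prodMk_left)
      (hG.comp measurable_prodMk_right)
  have hmeas : Measurable fun u => Measure.map (fun θ => (θ, u)) (ν.withDensity (p u)) := by
    refine Measure.measurable_of_measurable_coe _ fun s hs => ?_
    have h : Measurable (s.indicator (1 : Θ × 𝒰 → ℝ≥0∞)) := measurable_one.indicator hs
    simp_rw [← lintegral_indicator_one hs, key _ h]
    exact Measurable.lintegral_prod_right'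
      (f := fun z : 𝒰 × Θ => p z.1 z.2 * s.indicator 1 (z.2, z.1))
      (hp.mul (h.comp measurable_swap))
  rw [Measure.lintegral_bind hmeas.aemeasurable hF.aemeasurable]
  exact lintegral_congr fun u => key F hF u

/-- the ideal marginal scheme dominates the pseudo-marginal scheme.
Let `π̄` be a probability measure on `Θ × 𝒰` with `u`-marginal `π̄(du)` and conditional
densities `π̄(θ|u) > 0` with respect to a σ-finite measure `ν` on `Θ`, let `K` be a
Markov kernel on `𝒰` and let the proposal kernel on `Θ` have positive density `q` with
respect to `ν`.  For nonnegative measurable `r, g : 𝒰² → [0,∞)`, the acceptance-weighted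
stationary expectations satisfy `Δ_Q(g) ≤ Δ_Q̄(g)`, where `Q̄` refreshes `θ` exactly from
`π̄(·|u')` and `Q` is the Metropolis–Hastings-type joint update. -/
theorem stmt18
    {Θ 𝒰 : Type*} [MeasurableSpace Θ] [MeasurableSpace 𝒰]
    (πbar : Measure (Θ × 𝒰)) [IsProbabilityMeasure πbar]
    (ν : Measure Θ) [SigmaFinite ν]
    (πc : 𝒰 → Θ → ℝ) (hπcmeas : Measurable (Function.uncurry πc))
    (hπcpos : ∀ u θ, 0 < πc u θ)
    (hπcint : ∀ u, (∫ θ, πc u θ ∂ν) = 1)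
    (hdis : πbar = (Measure.map Prod.snd πbar).bind
      (fun u => Measure.map (fun θ => (θ, u))
        (ν.withDensity fun θ => ENNReal.ofReal (πc u θ))))
    (K : 𝒰 → Measure 𝒰) (hKmeas : Measurable K) (hKprob : ∀ u, IsProbabilityMeasure (K u))
    (q : Θ → Θ → ℝ) (hqmeas : Measurable (Function.uncurry q))
    (hqpos : ∀ θ θ', 0 < q θ θ')
    (hqint : ∀ θ, (∫ θ', q θ θ' ∂ν) = 1)
    (r g : 𝒰 → 𝒰 → ℝ)
    (hrmeas : Measurable (Function.uncurry r)) (hrnonneg : ∀ u u', 0 ≤ r u u')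
    (hgmeas : Measurable (Function.uncurry g)) (hgnonneg : ∀ u u', 0 ≤ g u u') :
    (∫⁻ x : Θ × 𝒰, (∫⁻ u', (∫⁻ θ', ENNReal.ofReal
          (min 1 (r x.2 u' * (πc u' θ' * q θ' x.1) / (πc x.2 x.1 * q x.1 θ'))
            * g x.2 u')
          ∂(ν.withDensity fun θ'' => ENNReal.ofReal (q x.1 θ''))) ∂(K x.2)) ∂πbar)
      ≤ ∫⁻ x : Θ × 𝒰, (∫⁻ u', (∫⁻ θ', ENNReal.ofReal (min 1 (r x.2 u') * g x.2 u')
          ∂(ν.withDensity fun θ'' => ENNReal.ofReal (πc u' θ''))) ∂(K x.2)) ∂πbar := by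
  have hp : Measurable (Function.uncurry fun u θ => ENNReal.ofReal (πc u θ)) :=
    hπcmeas.ennreal_ofReal
  have hqo : Measurable (Function.uncurry fun θ θ' => ENNReal.ofReal (q θ θ')) :=
    hqmeas.ennreal_ofReal
  let κ : ProbabilityTheory.Kernel 𝒰 𝒰 := ⟨K, hKmeas⟩
  have : ProbabilityTheory.IsMarkovKernel κ := ⟨hKprob⟩
  set m := Measure.map Prod.snd πbar with hm
  have hp1 : ∀ u, ∫⁻ θ, ENNReal.ofReal (πc u θ) ∂ν = 1 := fun u =>
    lintegral_ofReal_eq_one (hπcpos u) (hπcint u)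
  -- The acceptance-weighted integrand of the pseudo-marginal scheme.
  let A : Θ → 𝒰 → 𝒰 → Θ → ℝ≥0∞ := fun θ u u' θ' => ENNReal.ofReal
    (min 1 (r u u' * (πc u' θ' * q θ' θ) / (πc u θ * q θ θ')) * g u u')
  have hA : Measurable fun z : ((Θ × 𝒰) × 𝒰) × Θ => A z.1.1.1 z.1.1.2 z.1.2 z.2 := by
    have m1 : Measurable fun z : ((Θ × 𝒰) × 𝒰) × Θ => r z.1.1.2 z.1.2 :=
      hrmeas.comp (f := fun z : ((Θ × 𝒰) × 𝒰) × Θ => (z.1.1.2, z.1.2)) (by fun_prop)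
    have m2 : Measurable fun z : ((Θ × 𝒰) × 𝒰) × Θ => g z.1.1.2 z.1.2 :=
      hgmeas.comp (f := fun z : ((Θ × 𝒰) × 𝒰) × Θ => (z.1.1.2, z.1.2)) (by fun_prop)
    have m3 : Measurable fun z : ((Θ × 𝒰) × 𝒰) × Θ => πc z.1.2 z.2 :=
      hπcmeas.comp (f := fun z : ((Θ × 𝒰) × 𝒰) × Θ => (z.1.2, z.2)) (by fun_prop)
    have m4 : Measurable fun z : ((Θ × 𝒰) × 𝒰) × Θ => πc z.1.1.2 z.1.1.1 :=
      hπcmeas.comp (f := fun z : ((Θ × 𝒰) × 𝒰) × Θ => (z.1.1.2, z.1.1.1)) (by fun_prop)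
    have m5 : Measurable fun z : ((Θ × 𝒰) × 𝒰) × Θ => q z.2 z.1.1.1 :=
      hqmeas.comp (f := fun z : ((Θ × 𝒰) × 𝒰) × Θ => (z.2, z.1.1.1)) (by fun_prop)
    have m6 : Measurable fun z : ((Θ × 𝒰) × 𝒰) × Θ => q z.1.1.1 z.2 :=
      hqmeas.comp (f := fun z : ((Θ × 𝒰) × 𝒰) × Θ => (z.1.1.1, z.2)) (by fun_prop)
    exact ((measurable_const.min ((m1.mul (m3.mul m5)).div (m4.mul m6))).mul m2).ennreal_ofReal
  let B : Θ × 𝒰 → 𝒰 → ℝ≥0∞ := fun x u' =>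
    ∫⁻ θ', ENNReal.ofReal (q x.1 θ') * A x.1 x.2 u' θ' ∂ν
  have hB : Measurable (Function.uncurry B) :=
    Measurable.lintegral_prod_right'
      (f := fun z : ((Θ × 𝒰) × 𝒰) × Θ =>
        ENNReal.ofReal (q z.1.1.1 z.2) * A z.1.1.1 z.1.1.2 z.1.2 z.2)
      ((hqo.comp (f := fun z : ((Θ × 𝒰) × 𝒰) × Θ => (z.1.1.1, z.2)) (by fun_prop)).mul hA)
  have hBK : Measurable fun x : Θ × 𝒰 => ∫⁻ u', B x u' ∂(K x.2) :=
    Measurable.lintegral_kernel_prod_right (κ := κ.comap Prod.snd measurable_snd) hB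
  have hC : Measurable (Function.uncurry fun u u' => ENNReal.ofReal (min 1 (r u u') * g u u')) :=
    ((measurable_const.min hrmeas).mul hgmeas).ennreal_ofReal
  have hCK : Measurable fun u => ∫⁻ u', ENNReal.ofReal (min 1 (r u u') * g u u') ∂(K u) :=
    Measurable.lintegral_kernel_prod_right (κ := κ) hC
  have hL : ∀ x : Θ × 𝒰, ∀ u', (∫⁻ θ', ENNReal.ofReal
          (min 1 (r x.2 u' * (πc u' θ' * q θ' x.1) / (πc x.2 x.1 * q x.1 θ'))
            * g x.2 u')
          ∂(ν.withDensity fun θ'' => ENNReal.ofReal (q x.1 θ''))) = B x u' := by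
    intro x u'
    exact lintegral_withDensity_eq_lintegral_mul _ (hqo.comp measurable_prodMk_left)
      (hA.comp (measurable_prodMk_left (x := (x, u'))))
  have hR : ∀ x : Θ × 𝒰, ∀ u', (∫⁻ θ', ENNReal.ofReal (min 1 (r x.2 u') * g x.2 u')
          ∂(ν.withDensity fun θ'' => ENNReal.ofReal (πc u' θ'')))
        = ENNReal.ofReal (min 1 (r x.2 u') * g x.2 u') := by
    intro x u'
    rw [lintegral_const, withDensity_apply _ MeasurableSet.univ, Measure.restrict_univ, hp1,
      mul_one]
  simp_rw [hL, hR]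
  rw [← lintegral_map (f := fun u => ∫⁻ u', ENNReal.ofReal (min 1 (r u u') * g u u') ∂(K u))
    hCK measurable_snd, ← hm, hdis, lintegral_disintegration m ν _ hp _ hBK]
  refine lintegral_mono fun u => ?_
  have hBu : Measurable (Function.uncurry fun θ u' => B (θ, u) u') :=
    hB.comp (f := fun z : Θ × 𝒰 => ((z.1, u), z.2)) (by fun_prop)
  have hpu : Measurable fun z : Θ × 𝒰 => ENNReal.ofReal (πc u z.1) :=
    hp.comp (f := fun z : Θ × 𝒰 => (u, z.1)) (by fun_prop)
  have := hKprob u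
  calc ∫⁻ θ, ENNReal.ofReal (πc u θ) * ∫⁻ u', B (θ, u) u' ∂(K u) ∂ν
      = ∫⁻ θ, ∫⁻ u', ENNReal.ofReal (πc u θ) * B (θ, u) u' ∂(K u) ∂ν := by
        simp_rw [lintegral_const_mul' _ _ ENNReal.ofReal_ne_top]
    _ = ∫⁻ u', ∫⁻ θ, ENNReal.ofReal (πc u θ) * B (θ, u) u' ∂ν ∂(K u) :=
        lintegral_lintegral_swap (hpu.mul hBu).aemeasurable
    _ ≤ _ := lintegral_mono fun u' =>
        lintegral_accept_le ν (πc u) (πc u') (hπcmeas.comp measurable_prodMk_left)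
          (hπcpos u) (hπcpos u') (hπcint u) (hπcint u') q hqmeas hqpos hqint
          (r u u') (g u u') (hrnonneg u u') (hgnonneg u u')
end
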